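/- For any n × m matrices A, B with complex entries, per(A B*) = ⟨f_A, f_B⟩, where B* is the conjugate transpose of B, f_A = ∏_{i=1}^n (Σ_{j=1}^m a_{ij} x_j), f_B = ∏_{i=1}^n (Σ_{j=1}^m b_{ij} x_j), and ⟨·,·⟩ is the inner product on homogeneous polynomials of degree n in ℂ[x_1,…,x_m] defined by ⟨f,g⟩ = Σ_{K : {1,…,m} → ℕ, Σ K = n} K! · coe(x^K, f) · conj(coe(x^K, g)). -/

import Mathlib

/-!
Expanding the products over the choice functions `φ : Fin n → Fin m` (which column is picked in
each row), the coefficient of `x^K` in `f_A` is the sum of `∏ i, A i (φ i)` over the `φ` whose fibre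
sizes are given by `K` (`coeff_FPoly`). Expanding the permanent in the same way gives
`∑ φ, ∑ σ, (∏ i, A i (φ i)) * conj (∏ i, B (σ i) (φ i))`. Writing `φ = ψ ∘ σ`, the last product
is `∏ i, B i (ψ i)`, so what matters is the number of permutations `σ` with `ψ ∘ σ = φ`. This
number is `K!` if `φ` and `ψ` have the same fibre sizes `K`, and zero otherwise
(`card_perm_comp_eq`); grouping the pairs `(φ, ψ)` by `K` gives the inner product.
-/

open scoped BigOperators

/-- The permanent of a square complex matrix. -/
noncomputable def permanent {ι : Type*} [Fintype ι] [DecidableEq ι] (M : Matrix ι ι ℂ) : ℂ :=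
  ∑ σ : Equiv.Perm ι, ∏ i, M i (σ i)

/-- The polynomial `f_A = ∏_{i=1}^n (Σ_{j=1}^m a_{ij} x_j)` associated to an `n × m`
complex matrix `A`. -/
noncomputable def FPoly {n m : ℕ} (A : Matrix (Fin n) (Fin m) ℂ) : MvPolynomial (Fin m) ℂ :=
  ∏ i : Fin n, ∑ j : Fin m, MvPolynomial.C (A i j) * MvPolynomial.X j

/-- The inner product `⟨f,g⟩ = Σ_{K : sum K = n} K! ⋅ coe(x^K, f) ⋅ conj(coe(x^K, g))` on
(homogeneous degree-`n`) polynomials in `ℂ[x_j : j ∈ ι]`; the sum runs over all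
`K : ι → ℕ` with `Σ_j K j = n` (all such `K` satisfy `K j ≤ n` for every `j`). -/
noncomputable def polyInner {ι : Type*} [Fintype ι] [DecidableEq ι] (n : ℕ)
    (f g : MvPolynomial ι ℂ) : ℂ :=
  ∑ K ∈ (Fintype.piFinset fun _ : ι => Finset.range (n + 1)).filter
      (fun K => ∑ j, K j = n),
    (∏ j, ((K j).factorial : ℂ))
      * MvPolynomial.coeff (Finsupp.equivFunOnFinite.symm K) f
      * (starRingEnd ℂ) (MvPolynomial.coeff (Finsupp.equivFunOnFinite.symm K) g)

/-- The fibre sizes of `φ`: the exponent vector of the monomial `∏ i, x_{φ i}`. -/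
def fibreCount {n m : ℕ} (φ : Fin n → Fin m) : Fin m → ℕ :=
  fun j => Fintype.card {i // φ i = j}

theorem sum_fibreCount {n m : ℕ} (φ : Fin n → Fin m) : ∑ j, fibreCount φ j = n := by
  simpa [fibreCount] using Fintype.card_congr (Equiv.sigmaFiberEquiv φ)

theorem fibreCount_mem {n m : ℕ} (φ : Fin n → Fin m) :
    fibreCount φ ∈ (Fintype.piFinset fun _ : Fin m => Finset.range (n + 1)).filter
      (fun K => ∑ j, K j = n) := by
  rw [Finset.mem_filter, Fintype.mem_piFinset]
  refine ⟨fun j => Finset.mem_range_succ_iff.2 ?_, sum_fibreCount φ⟩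
  simpa [fibreCount] using Fintype.card_subtype_le (fun i => φ i = j)

theorem sum_single_eq_fibreCount {n m : ℕ} (φ : Fin n → Fin m) :
    ∑ i, Finsupp.single (φ i) 1 = Finsupp.equivFunOnFinite.symm (fibreCount φ) := by
  ext j
  simp [fibreCount, Finsupp.finsetSum_apply, Finsupp.single_apply, Fintype.card_subtype]

theorem coeff_FPoly {n m : ℕ} (A : Matrix (Fin n) (Fin m) ℂ) (K : Fin m → ℕ) :
    MvPolynomial.coeff (Finsupp.equivFunOnFinite.symm K) (FPoly A) =
      ∑ φ : Fin n → Fin m, if fibreCount φ = K then ∏ i, A i (φ i) else 0 := by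
  rw [FPoly, Fintype.prod_sum, MvPolynomial.coeff_sum]
  refine Finset.sum_congr rfl fun φ _ => ?_
  have hX : ∏ i, (MvPolynomial.X (φ i) : MvPolynomial (Fin m) ℂ) =
      MvPolynomial.monomial (Finsupp.equivFunOnFinite.symm (fibreCount φ)) 1 := by
    rw [← sum_single_eq_fibreCount, MvPolynomial.monomial_sum_one]
    rfl
  rw [Finset.prod_mul_distrib, hX, ← map_prod, MvPolynomial.coeff_C_mul,
    MvPolynomial.coeff_monomial]
  simp [Finsupp.equivFunOnFinite.symm.injective.eq_iff]

/-- Functions with equal fibre sizes differ by a permutation of the domain. -/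
theorem exists_perm_comp_eq {n m : ℕ} {φ ψ : Fin n → Fin m} (h : fibreCount φ = fibreCount ψ) :
    ∃ σ : Equiv.Perm (Fin n), ψ ∘ σ = φ := by
  have e : ∀ j, Nonempty ({i // φ i = j} ≃ {i // ψ i = j}) := fun j =>
    Fintype.card_eq.1 (congrFun h j)
  let e := fun j => (e j).some
  refine ⟨(Equiv.sigmaFiberEquiv φ).symm.trans
    ((Equiv.sigmaCongrRight e).trans (Equiv.sigmaFiberEquiv ψ)), funext fun i => ?_⟩
  exact (e (φ i) ⟨i, rfl⟩).2

theorem fibreCount_comp_perm {n m : ℕ} (ψ : Fin n → Fin m) (σ : Equiv.Perm (Fin n)) :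
    fibreCount (ψ ∘ σ) = fibreCount ψ :=
  funext fun _ => Fintype.card_congr (σ.subtypeEquiv fun _ => Iff.rfl)

/-- The permutations `σ` with `ψ ∘ σ = φ` form a coset of the stabilizer of `ψ`, or the empty
set. -/
theorem card_perm_comp_eq {n m : ℕ} (φ ψ : Fin n → Fin m) :
    Fintype.card {σ : Equiv.Perm (Fin n) // ψ ∘ σ = φ} =
      if fibreCount φ = fibreCount ψ then ∏ j, (fibreCount φ j).factorial else 0 := by
  split_ifs with h
  · obtain ⟨τ, rfl⟩ := exists_perm_comp_eq h
    rw [h]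
    refine Eq.trans ?_ (DomMulAct.stabilizer_card ψ)
    refine Fintype.card_congr ((Equiv.mulRight τ⁻¹).subtypeEquiv fun σ => ?_)
    constructor
    · intro hσ
      funext i
      simpa using congrFun hσ (τ⁻¹ i)
    · intro hσ
      funext i
      simpa using congrFun hσ (τ i)
  · rw [Fintype.card_eq_zero_iff]
    refine ⟨fun ⟨σ, hσ⟩ => h ?_⟩
    rw [← hσ, fibreCount_comp_perm]

theorem sum_perm_prod {n m : ℕ} (B : Matrix (Fin n) (Fin m) ℂ) (φ : Fin n → Fin m) :
    ∑ σ : Equiv.Perm (Fin n), ∏ i, B (σ i) (φ i) =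
      ∑ ψ : Fin n → Fin m, if fibreCount φ = fibreCount ψ then
        (∏ j, ((fibreCount φ j).factorial : ℂ)) * ∏ i, B i (ψ i) else 0 := by
  have key : ∀ σ : Equiv.Perm (Fin n), ∏ i, B (σ i) (φ i) =
      ∑ ψ : Fin n → Fin m, if ψ ∘ σ = φ then ∏ i, B i (ψ i) else 0 := by
    intro σ
    rw [Finset.sum_eq_single (φ ∘ σ.symm)]
    · rw [if_pos (by funext i; simp), ← Equiv.prod_comp σ (fun i => B i ((φ ∘ σ.symm) i))]
      simp
    · intro ψ _ hψ
      refine if_neg fun h => hψ ?_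
      rw [← h]
      funext i
      simp
    · simp
  simp_rw [key]
  rw [Finset.sum_comm]
  refine Finset.sum_congr rfl fun ψ _ => ?_
  rw [← Finset.sum_filter, Finset.sum_const, ← Fintype.card_subtype, card_perm_comp_eq]
  split_ifs <;> simp

/-- For `n × m` complex matrices `A, B`, the permanent of `A Bᴴ` equals the inner product
`⟨f_A, f_B⟩`. -/
theorem permanent_mul_conjTranspose_eq_inner {n m : ℕ} (A B : Matrix (Fin n) (Fin m) ℂ) :
    permanent (A * B.conjTranspose) = polyInner n (FPoly A) (FPoly B) := by
  have hL : permanent (A * B.conjTranspose) = ∑ φ : Fin n → Fin m,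
      (∏ i, A i (φ i)) *
        (starRingEnd ℂ) (∑ σ : Equiv.Perm (Fin n), ∏ i, B (σ i) (φ i)) := by
    simp only [permanent, Matrix.mul_apply, Matrix.conjTranspose_apply, Fintype.prod_sum,
      map_sum, map_prod, Finset.mul_sum, Finset.prod_mul_distrib]
    rw [Finset.sum_comm]
    rfl
  rw [hL, polyInner]
  simp_rw [coeff_FPoly, Finset.mul_sum, Finset.sum_mul]
  rw [Finset.sum_comm]
  refine Finset.sum_congr rfl fun φ _ => ?_
  -- Only `K = fibreCount φ` contributes to the sum over exponent vectors.
  rw [Finset.sum_eq_single_of_mem _ (fibreCount_mem φ)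
    (fun K _ hK => by rw [if_neg (Ne.symm hK)]; simp), if_pos rfl, sum_perm_prod,
    mul_comm (∏ j, ((fibreCount φ j).factorial : ℂ)), mul_assoc]
  congr 1
  rw [map_sum, map_sum, Finset.mul_sum]
  refine Finset.sum_congr rfl fun ψ _ => ?_
  by_cases h : fibreCount φ = fibreCount ψ
  · simp [h]
  · simp [h, Ne.symm h]
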